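/- For every integer l ≥ 1 there exist a number field k (a finite extension of ℚ), a finite group G, a field extension K/k, an integer n, and a representation ρ : G → GL_n(K) whose essential dimension equals l; that is, ρ descends to some intermediate field k ⊆ K₀ ⊆ K with trdeg_k(K₀) = l, and ρ does not descend to any intermediate field k ⊆ K₀ ⊆ K with trdeg_k(K₀) < l. -/

import Mathlib

open Matrix

/-- A representation `ρ : G → GL_n(K)` descends to an intermediate field `K₀` of `K/k` if
it is `K`-equivalent (conjugate) to the base change of some representation over `K₀`. -/
def Descends {k K : Type*} [Field k] [Field K] [Algebra k K] {G : Type*} [Group G] {n : ℕ}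
    (ρ : G →* GL (Fin n) K) (K₀ : IntermediateField k K) : Prop :=
  ∃ ρ' : G →* GL (Fin n) K₀, ∃ M : GL (Fin n) K,
    ∀ g, ρ g = M * Units.map ((algebraMap K₀ K).mapMatrix).toMonoidHom (ρ' g) * M⁻¹

/-- The transcendence degree of `K₀` over `k` equals `d`: every algebraically independent
finite subset has at most `d` elements, and some algebraically independent finite subset
has exactly `d` elements. -/
def TrdegEq {k K : Type*} [Field k] [Field K] [Algebra k K]
    (K₀ : IntermediateField k K) (d : ℕ) : Prop :=
  (∀ s : Finset K₀,
      AlgebraicIndependent k (fun x : {y : K₀ // y ∈ s} => (x : K₀)) → s.card ≤ d) ∧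
  (∃ s : Finset K₀,
      AlgebraicIndependent k (fun x : {y : K₀ // y ∈ s} => (x : K₀)) ∧ s.card = d)

/-- The transcendence degree of `K₀` over `k` is (strictly) less than `d`. -/
def TrdegLT {k K : Type*} [Field k] [Field K] [Algebra k K]
    (K₀ : IntermediateField k K) (d : ℕ) : Prop :=
  ∀ s : Finset K₀,
    AlgebraicIndependent k (fun x : {y : K₀ // y ∈ s} => (x : K₀)) → s.card < d

/-- A witness that there is a representation of a finite group over an extension of a
number field whose essential dimension is exactly `l`. -/
structure EdRepWitness (l : ℕ) : Type 1 where
  k : Type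
  K : Type
  G : Type
  [field_k : Field k]
  [field_K : Field K]
  [alg : Algebra k K]
  [nf : NumberField k]
  [grp : Group G]
  [fin : Finite G]
  n : ℕ
  ρ : G →* GL (Fin n) K
  descends_to_l : ∃ K₀ : IntermediateField k K, Descends ρ K₀ ∧ TrdegEq K₀ l
  not_below_l : ∀ K₀ : IntermediateField k K, TrdegLT K₀ l → ¬ Descends ρ K₀

/-!
Take `k = ℚ` and distinct primes `p₁, …, p_l ≡ 3 mod 4`, and let `K` be the function field of the
product of the conics `a_j ^ 2 + b_j ^ 2 = -p_j`. Sums of two squares are the norms from `k(√-1)`,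
and the `-p_j` are independent modulo squares and norms from `ℚ(√-1)`.

The product of conics is incompressible: if all `-p_j` are sums of two squares in an intermediate
field `K₀`, then `K₀` has transcendence degree `l`. Indeed, over `k(√-1)` each representation of
`-p_j` becomes an element `s_j` of norm `-p_j`, and the generic elements `t_j` of `K(√-1)` of the
same norms can be exchanged one at a time for the `s_j`, the degree of `K(√-1)` over the field they
generate staying odd, hence finite: a polynomial relation of bidegree `(n, m)` between two elements
of norm `d` is proportional to its conjugate, and comparing constants shows that `d ^ (n + m)` is a
norm while `d` is not, so that `n` and `m` have the same parity.

Over `K`, a twist of complex conjugation on `ℚ(ζ_p)` (with `p = p_j`) gives a matrix `Y` of size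
`p - 1` with `Y ^ 2 = -1` which inverts `ζ_p`, so that `Y` and `ζ_p` generate a finite group. As `Y`
anticommutes with the Gauss sum `W = √-p`, a descent of this representation to `K₀` makes the
quaternion algebra `(-1, -p)` over `K₀` act on a space of dimension `p - 1 ≡ 2 mod 4`. It therefore
splits, that is, `-p` is a sum of two squares in `K₀`.
-/

namespace EdRep

/-! ### Polynomial relations between elements of given norms -/

section GaussLemma

open Polynomial IntermediateField

variable {R F Ω : Type*} [CommRing R] [Field Ω] [Algebra R Ω] {u : Ω} {f : R[X]}

lemma isPrimitive_of_irreducible_of_aeval_eq_zero [NoZeroDivisors R] [FaithfulSMul R Ω]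
    (hf : Irreducible f) (hfu : aeval u f = 0) : f.IsPrimitive := by
  refine hf.isPrimitive fun hdeg => hf.ne_zero ?_
  obtain ⟨r, rfl⟩ := natDegree_eq_zero.1 hdeg
  rw [aeval_C, FaithfulSMul.algebraMap_eq_zero_iff] at hfu
  rw [hfu, map_zero]

variable [IsDomain R] [UniqueFactorizationMonoid R]

lemma exists_irreducible_aeval_eq_zero (hu : IsAlgebraic R u) :
    ∃ f : R[X], Irreducible f ∧ aeval u f = 0 := by
  obtain ⟨g, hg, hgu⟩ := hu
  have hprime : (RingHom.ker (aeval u : R[X] →ₐ[R] Ω)).IsPrime := RingHom.ker_isPrime _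
  have hker : RingHom.ker (aeval u : R[X] →ₐ[R] Ω) ≠ ⊥ := fun h =>
    hg ((Submodule.mem_bot R[X]).1 (h ▸ RingHom.mem_ker.2 hgu))
  obtain ⟨f, hfu, hf⟩ := hprime.exists_mem_prime_of_ne_bot hker
  exact ⟨f, hf.irreducible, hfu⟩

variable [Field F] [Algebra R F] [IsFractionRing R F] [Algebra F Ω] [IsScalarTower R F Ω]

variable (F)

lemma minpoly_eq_of_irreducible_of_aeval_eq_zero (hf : Irreducible f) (hfu : aeval u f = 0) :
    f.map (algebraMap R F) * C (f.map (algebraMap R F)).leadingCoeff⁻¹ = minpoly F u := by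
  have : FaithfulSMul R Ω := .trans R F Ω
  have hprim := isPrimitive_of_irreducible_of_aeval_eq_zero hf hfu
  exact minpoly.eq_of_irreducible (hprim.irreducible_iff_irreducible_map_fraction_map.1 hf)
    (by rwa [aeval_map_algebraMap])

lemma natDegree_minpoly_of_irreducible (hf : Irreducible f) (hfu : aeval u f = 0) :
    (minpoly F u).natDegree = f.natDegree := by
  have hmap : f.map (algebraMap R F) ≠ 0 :=
    (Polynomial.map_ne_zero_iff (IsFractionRing.injective R F)).2 hf.ne_zero
  rw [← minpoly_eq_of_irreducible_of_aeval_eq_zero F hf hfu,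
    natDegree_mul_C (inv_ne_zero (leadingCoeff_ne_zero.2 hmap)),
    natDegree_map_eq_of_injective (IsFractionRing.injective R F)]

lemma dvd_of_aeval_eq_zero_of_irreducible [FaithfulSMul R Ω] (hf : Irreducible f)
    (hfu : aeval u f = 0) {g : R[X]} (hgu : aeval u g = 0) : f ∣ g := by
  let _ : Algebra (FractionRing R) Ω := FractionRing.liftAlgebra R Ω
  have hprim := isPrimitive_of_irreducible_of_aeval_eq_zero hf hfu
  refine hprim.dvd_of_fraction_map_dvd_fraction_map (K := FractionRing R) ?_
  refine (Dvd.intro _ (minpoly_eq_of_irreducible_of_aeval_eq_zero _ hf hfu)).trans ?_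
  exact minpoly.dvd _ u (by rwa [aeval_map_algebraMap])

end GaussLemma

section Bivariate

open Polynomial IntermediateField

variable {E Ω : Type*} [Field E] [Field Ω] [Algebra E Ω] {u v : Ω}

lemma exists_isFractionRing_adjoin_simple (hv : Transcendental E v) :
    ∃ (_ : Algebra E[X] E⟮v⟯) (_ : Algebra E[X] Ω) (_ : IsFractionRing E[X] E⟮v⟯),
      IsScalarTower E[X] E⟮v⟯ Ω ∧ ∀ (u : Ω) (f : E[X][X]), aeval u f = f.aevalAeval v u := by
  let _ : Algebra E[X] E⟮v⟯ := (aeval (AdjoinSimple.gen E v)).toAlgebra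
  let _ : Algebra E[X] Ω := (aeval v).toAlgebra
  refine ⟨inferInstance, inferInstance, ?_, .of_algebraMap_eq fun g => ?_, fun u f => ?_⟩
  · exact .of_algEquiv (AlgEquiv.ofRingEquiv
      (f := (RatFunc.algEquivOfTranscendental v hv).toRingEquiv)
      (RatFunc.algEquivOfTranscendental_algebraMap v hv))
  · exact aeval_algebraMap_apply Ω (AdjoinSimple.gen E v) g
  · induction f using Polynomial.induction_on' with
    | add p q hp hq => rw [map_add, map_add, hp, hq]
    | monomial n a =>
      rw [aeval_monomial, ← C_mul_X_pow_eq_monomial]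
      simp [RingHom.algebraMap_toAlgebra]

lemma exists_irreducible_aevalAeval_eq_zero (hv : Transcendental E v) (hu : IsAlgebraic E⟮v⟯ u) :
    ∃ f : E[X][X], Irreducible f ∧ f.aevalAeval v u = 0 := by
  obtain ⟨_, _, _, _, haeval⟩ := exists_isFractionRing_adjoin_simple hv
  simpa only [haeval] using
    exists_irreducible_aeval_eq_zero ((IsFractionRing.isAlgebraic_iff E[X] E⟮v⟯ Ω).2 hu)

lemma natDegree_minpoly_adjoin_simple (hv : Transcendental E v) {f : E[X][X]} (hf : Irreducible f)
    (hfvu : f.aevalAeval v u = 0) : (minpoly E⟮v⟯ u).natDegree = f.natDegree := by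
  obtain ⟨_, _, _, _, haeval⟩ := exists_isFractionRing_adjoin_simple hv
  exact natDegree_minpoly_of_irreducible E⟮v⟯ hf ((haeval u f).trans hfvu)

lemma dvd_of_aevalAeval_eq_zero (hv : Transcendental E v) {f g : E[X][X]} (hf : Irreducible f)
    (hfvu : f.aevalAeval v u = 0) (hgvu : g.aevalAeval v u = 0) : f ∣ g := by
  obtain ⟨_, _, _, _, haeval⟩ := exists_isFractionRing_adjoin_simple hv
  have : FaithfulSMul E[X] Ω := .trans E[X] E⟮v⟯ Ω
  exact dvd_of_aeval_eq_zero_of_irreducible hf ((haeval u f).trans hfvu) ((haeval u g).trans hgvu)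

lemma transcendental_of_natDegree_swap_ne_zero (hv : Transcendental E v) {f : E[X][X]}
    (hf : Irreducible f) (hfvu : f.aevalAeval v u = 0) (hdeg : (Bivariate.swap f).natDegree ≠ 0) :
    Transcendental E u := by
  rintro ⟨q, hq, hqu⟩
  have hqvu : (q.map C).aevalAeval v u = 0 := by
    rw [← Bivariate.swap_C, Bivariate.aevalAeval_swap, aevalAeval_C, hqu]
  obtain ⟨r, hr⟩ := dvd_of_aevalAeval_eq_zero hv hf hfvu hqvu
  have hdvd : Bivariate.swap f ∣ C q :=
    ⟨Bivariate.swap r, by rw [← map_mul, ← hr, Bivariate.swap_map_C]⟩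
  have := natDegree_le_of_dvd hdvd (C_ne_zero.2 hq)
  rw [natDegree_C] at this
  exact hdeg (Nat.le_zero.1 this)

end Bivariate

section Swap

open Polynomial

variable {R : Type*} [CommRing R]

lemma coeff_coeff_swap (f : R[X][X]) (i j : ℕ) :
    ((Bivariate.swap f).coeff i).coeff j = (f.coeff j).coeff i := by
  induction f using Polynomial.induction_on' with
  | add p q hp hq => simp only [map_add, coeff_add, hp, hq]
  | monomial n a =>
    induction a using Polynomial.induction_on' with
    | add p q hp hq => simp only [map_add, coeff_add, hp, hq]
    | monomial k r =>
      rw [Bivariate.swap_monomial_monomial]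
      by_cases h1 : k = i <;> by_cases h2 : n = j <;> simp [h1, h2, coeff_monomial]

lemma natDegree_swap_le_iff {f : R[X][X]} {n : ℕ} :
    (Bivariate.swap f).natDegree ≤ n ↔ ∀ j, (f.coeff j).natDegree ≤ n := by
  simp only [natDegree_le_iff_coeff_eq_zero, Polynomial.ext_iff, coeff_coeff_swap, coeff_zero]
  exact ⟨fun h j i hi => h i hi j, fun h i hi j => h j i hi⟩

lemma aevalAeval_eq_sum_range {Ω : Type*} [CommRing Ω] [Algebra R Ω] (v u : Ω) {f : R[X][X]}
    {m n : ℕ} (hm : f.natDegree ≤ m) (hn : (Bivariate.swap f).natDegree ≤ n) :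
    f.aevalAeval v u = ∑ b ∈ Finset.range (m + 1), ∑ a ∈ Finset.range (n + 1),
      algebraMap R Ω ((f.coeff b).coeff a) * v ^ a * u ^ b := by
  conv_lhs => rw [f.as_sum_range_C_mul_X_pow' (Nat.lt_succ_of_le hm)]
  simp only [map_sum, map_mul, map_pow, aevalAeval_C, aevalAeval_Y]
  refine Finset.sum_congr rfl fun b _ => ?_
  rw [aeval_eq_sum_range' (Nat.lt_succ_of_le (natDegree_swap_le_iff.1 hn b)), Finset.sum_mul]
  simp only [Algebra.smul_def]

lemma exists_eq_C_C_mul_of_dvd [IsDomain R] {f g : R[X][X]} (hfg : f ∣ g)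
    (hdeg : g.natDegree ≤ f.natDegree)
    (hdeg' : (Bivariate.swap g).natDegree ≤ (Bivariate.swap f).natDegree) :
    ∃ c : R, g = C (C c) * f := by
  obtain ⟨q, rfl⟩ := hfg
  rcases eq_or_ne (f * q) 0 with h0 | h0
  · exact ⟨0, by simp [h0]⟩
  have hf := left_ne_zero_of_mul h0
  have hq := right_ne_zero_of_mul h0
  rw [natDegree_mul hf hq] at hdeg
  obtain ⟨r, rfl⟩ := natDegree_eq_zero.1 (show q.natDegree = 0 by lia)
  rw [map_mul, natDegree_mul (by simpa) (by simpa using hq), Bivariate.swap_C,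
    natDegree_map_eq_of_injective (C_injective)] at hdeg'
  obtain ⟨c, rfl⟩ := natDegree_eq_zero.1 (show r.natDegree = 0 by lia)
  exact ⟨c, mul_comm _ _⟩

end Swap

section ConjReverse

open Polynomial

variable {E Ω : Type*} [Field E] [StarRing E] {d d' : E} {n m : ℕ}

/-- The polynomial `x ^ n * y ^ m * g (d / x, d' / y)`, where `g` is obtained from `f` by applying
`star` to the coefficients; it is only meaningful for `f` of bidegree at most `(n, m)`. The outer
variable is `y`. -/
noncomputable def conjReverse (d d' : E) (n m : ℕ) (f : E[X][X]) : E[X][X] :=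
  ∑ b ∈ Finset.range (m + 1), monomial b (∑ a ∈ Finset.range (n + 1),
    monomial a (star ((f.coeff (m - b)).coeff (n - a)) * d ^ (n - a) * d' ^ (m - b)))

lemma coeff_coeff_conjReverse (d d' : E) (f : E[X][X]) {a b : ℕ} (ha : a ≤ n) (hb : b ≤ m) :
    ((conjReverse d d' n m f).coeff (m - b)).coeff (n - a) =
      star ((f.coeff b).coeff a) * d ^ a * d' ^ b := by
  simp [conjReverse, coeff_monomial, Nat.sub_sub_self, ha, hb]

lemma natDegree_conjReverse_le (f : E[X][X]) : (conjReverse d d' n m f).natDegree ≤ m :=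
  natDegree_sum_le_of_forall_le _ _ fun _ hb =>
    (natDegree_monomial_le _).trans (Finset.mem_range_succ_iff.1 hb)

lemma natDegree_swap_conjReverse_le (f : E[X][X]) :
    (Bivariate.swap (conjReverse d d' n m f)).natDegree ≤ n := by
  refine natDegree_swap_le_iff.2 fun j => ?_
  simp only [conjReverse, finsetSum_coeff, coeff_monomial]
  refine natDegree_sum_le_of_forall_le _ _ fun b _ => ?_
  split_ifs
  · exact natDegree_sum_le_of_forall_le _ _ fun a ha =>
      (natDegree_monomial_le _).trans (Finset.mem_range_succ_iff.1 ha)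
  · simp

variable [Field Ω] [StarRing Ω] [Algebra E Ω] [StarModule E Ω] {u v : Ω}

lemma aevalAeval_conjReverse (hv : v * star v = algebraMap E Ω d)
    (hu : u * star u = algebraMap E Ω d') {f : E[X][X]} (hm : f.natDegree ≤ m)
    (hn : (Bivariate.swap f).natDegree ≤ n) :
    (conjReverse d d' n m f).aevalAeval v u = v ^ n * u ^ m * star (f.aevalAeval v u) := by
  rw [aevalAeval_eq_sum_range v u (natDegree_conjReverse_le f) (natDegree_swap_conjReverse_le f),
    aevalAeval_eq_sum_range v u hm hn, ← Finset.sum_range_reflect]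
  simp only [star_sum, Finset.mul_sum, Nat.add_sub_cancel]
  refine Finset.sum_congr rfl fun b hb => ?_
  rw [← Finset.sum_range_reflect]
  refine Finset.sum_congr rfl fun a ha => ?_
  rw [Nat.add_sub_cancel]
  have ha := Finset.mem_range_succ_iff.1 ha
  have hb := Finset.mem_range_succ_iff.1 hb
  rw [coeff_coeff_conjReverse _ _ _ ha hb, ← pow_sub_mul_pow v ha, ← pow_sub_mul_pow u hb]
  simp only [map_mul, map_pow, ← hv, ← hu, algebraMap_star_comm, star_mul', star_pow]
  ring

lemma star_eq_self_of_mul_star_eq (hv : v * star v = algebraMap E Ω d) : star d = d := by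
  apply (algebraMap E Ω).injective
  rw [algebraMap_star_comm, ← hv, star_mul, star_star]

-- `conjReverse f` vanishes wherever `f` does, so it is a multiple `c * f`, and applying
-- `conjReverse` twice computes the norm of `c`.
lemma exists_mul_star_eq_of_irreducible (hv : v * star v = algebraMap E Ω d)
    (hu : u * star u = algebraMap E Ω d') (htr : Transcendental E v) {f : E[X][X]}
    (hf : Irreducible f) (hfvu : f.aevalAeval v u = 0) :
    ∃ c : E, c * star c = d ^ (Bivariate.swap f).natDegree * d' ^ f.natDegree := by
  set n := (Bivariate.swap f).natDegree
  set m := f.natDegree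
  have hdvd : f ∣ conjReverse d d' n m f := dvd_of_aevalAeval_eq_zero htr hf hfvu
    (by rw [aevalAeval_conjReverse hv hu le_rfl le_rfl, hfvu, star_zero, mul_zero])
  obtain ⟨c, hc⟩ := exists_eq_C_C_mul_of_dvd hdvd (natDegree_conjReverse_le f)
    (natDegree_swap_conjReverse_le f)
  obtain ⟨b, hb⟩ : ∃ b, f.coeff b ≠ 0 := by
    by_contra! h
    exact hf.ne_zero (Polynomial.ext h)
  obtain ⟨a, ha⟩ : ∃ a, (f.coeff b).coeff a ≠ 0 := by
    by_contra! h
    exact hb (Polynomial.ext h)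
  have hbm : b ≤ m := le_natDegree_of_ne_zero hb
  have han : a ≤ n := (le_natDegree_of_ne_zero ha).trans (natDegree_swap_le_iff.1 le_rfl b)
  have hcoeff : ∀ {a b}, a ≤ n → b ≤ m →
      c * (f.coeff (m - b)).coeff (n - a) = star ((f.coeff b).coeff a) * d ^ a * d' ^ b := by
    intro a b ha hb
    rw [← coeff_coeff_conjReverse d d' f ha hb, hc, coeff_C_mul, coeff_C_mul]
  have h1 := congrArg star (hcoeff han hbm)
  have h2 := hcoeff (Nat.sub_le n a) (Nat.sub_le m b)
  rw [Nat.sub_sub_self han, Nat.sub_sub_self hbm] at h2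
  simp only [star_mul', star_pow, star_eq_self_of_mul_star_eq hv,
    star_eq_self_of_mul_star_eq hu, star_star] at h1
  refine ⟨c, mul_left_cancel₀ ha ?_⟩
  calc (f.coeff b).coeff a * (c * star c)
      = star c * (c * (f.coeff b).coeff a) := by ring
    _ = star c * star ((f.coeff (m - b)).coeff (n - a)) * d ^ (n - a) * d' ^ (m - b) := by
        rw [h2]; ring
    _ = (f.coeff b).coeff a * (d ^ (n - a) * d ^ a * (d' ^ (m - b) * d' ^ b)) := by rw [h1]; ring
    _ = _ := by rw [pow_sub_mul_pow d han, pow_sub_mul_pow d' hbm]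

end ConjReverse

section Adjoin

open Polynomial IntermediateField

variable {F Ω ι : Type*} [Field F] [Field Ω] [Algebra F Ω] {u : Ω}

lemma natDegree_minpoly_mul_finrank (hu : IsIntegral F u) :
    (minpoly F u).natDegree * Module.finrank F⟮u⟯ Ω = Module.finrank F Ω := by
  rw [← adjoin.finrank hu, Module.finrank_mul_finrank]

lemma restrictScalars_adjoin_simple_adjoin (S : Set Ω) :
    (adjoin F S)⟮u⟯.restrictScalars F = adjoin F (insert u S) := by
  rw [adjoin_adjoin_left, Set.union_singleton]

lemma isTranscendenceBasis_of_isAlgebraic_adjoin [Finite ι] {t z : ι → Ω}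
    (ht : IsTranscendenceBasis F t) (hz : Algebra.IsAlgebraic (adjoin F (Set.range z)) Ω) :
    IsTranscendenceBasis F z :=
  have := isAlgebraic_adjoin_iff_top.1 hz
  Algebra.IsAlgebraic.isTranscendenceBasis_of_lift_le_trdeg_of_finite F z
    ht.lift_cardinalMk_eq_trdeg.le

lemma range_update_eq_insert {α : Type*} [DecidableEq ι] (z : ι → α) (j : ι) (u : α) :
    Set.range (Function.update z j u) = insert u (z '' {j}ᶜ) := by
  rw [← Set.image_univ, ← Set.union_compl_self {j}, Set.image_union, Set.image_singleton,
    Function.update_self, Set.singleton_union]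
  exact congrArg _ (Set.image_congr fun i hi => Function.update_of_ne hi u z)

lemma prod_pow_update_of_notMem {M : Type*} [CommMonoid M] [DecidableEq ι] (d : ι → M) (n : ι → ℕ)
    {T : Finset ι} {i : ι} (hi : i ∉ T) (a : ℕ) :
    ∏ x ∈ T, d x ^ Function.update n i a x = ∏ x ∈ T, d x ^ n x :=
  Finset.prod_congr rfl fun _ hx => by rw [Function.update_of_ne (ne_of_mem_of_not_mem hx hi)]

end Adjoin

section Exchange

open Polynomial IntermediateField

variable {E Ω : Type*} [Field E] [StarRing E] [Field Ω] [StarRing Ω] [Algebra E Ω] [StarModule E Ω]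
  {d d' : E} {u v : Ω}

lemma exists_mul_star_eq_pow_mul_pow (hv : v * star v = algebraMap E Ω d)
    (hu : u * star u = algebraMap E Ω d') (htr : Transcendental E v) (halg : IsAlgebraic E⟮v⟯ u) :
    ∃ (c : E) (n : ℕ), c * star c = d ^ n * d' ^ (minpoly E⟮v⟯ u).natDegree ∧
      (n ≠ 0 → (minpoly E⟮u⟯ v).natDegree = n) := by
  obtain ⟨f, hf, hfvu⟩ := exists_irreducible_aevalAeval_eq_zero htr halg
  obtain ⟨c, hc⟩ := exists_mul_star_eq_of_irreducible hv hu htr hf hfvu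
  refine ⟨c, (Bivariate.swap f).natDegree, ?_, fun hdeg => ?_⟩
  · rw [hc, natDegree_minpoly_adjoin_simple htr hf hfvu]
  · refine natDegree_minpoly_adjoin_simple
      (transcendental_of_natDegree_swap_ne_zero htr hf hfvu hdeg)
      ((MulEquiv.irreducible_iff (Bivariate.swap (R := E))).2 hf) ?_
    rw [Bivariate.aevalAeval_swap, hfvu]

lemma odd_finrank_adjoin_simple (hv : v * star v = algebraMap E Ω d)
    (hu : u * star u = algebraMap E Ω d) (hd : ∀ c : E, c * star c ≠ d) (htr : Transcendental E v)
    (hodd : Odd (Module.finrank E⟮v⟯ Ω)) : Odd (Module.finrank E⟮u⟯ Ω) := by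
  have hfin : FiniteDimensional E⟮v⟯ Ω := .of_finrank_pos hodd.pos
  have hualg : IsAlgebraic E⟮v⟯ u := Algebra.IsAlgebraic.isAlgebraic u
  obtain ⟨c, n, hc, hn⟩ := exists_mul_star_eq_pow_mul_pow hv hu htr hualg
  rw [← natDegree_minpoly_mul_finrank hualg.isIntegral, Nat.odd_mul] at hodd
  have hn_odd : Odd n := by
    by_contra hn_even
    obtain ⟨r, hr⟩ := (Nat.not_odd_iff_even.1 hn_even).add_odd hodd.1
    have hd0 : d ≠ 0 := fun h => hd 0 (by rw [h, zero_mul])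
    apply hd (c * (d ^ r)⁻¹)
    rw [star_mul', star_inv₀, star_pow, star_eq_self_of_mul_star_eq hv, mul_mul_mul_comm, hc,
      ← pow_add, hr]
    field
  have hdeg := hn hn_odd.pos.ne'
  have hvint : IsIntegral E⟮u⟯ v := by
    by_contra h
    rw [minpoly.eq_zero h, natDegree_zero] at hdeg
    exact hn_odd.pos.ne hdeg
  have hcomm : Module.finrank E⟮u⟯⟮v⟯ Ω = Module.finrank E⟮v⟯⟮u⟯ Ω := by
    change Module.finrank (E⟮u⟯⟮v⟯.restrictScalars E) Ω =
      Module.finrank (E⟮v⟯⟮u⟯.restrictScalars E) Ω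
    rw [adjoin_simple_comm]
  rw [← natDegree_minpoly_mul_finrank hvint, hdeg, hcomm]
  exact hn_odd.mul hodd.2

end Exchange

section Incompressibility

open IntermediateField

variable {L Ω ι : Type*} [Field L] [StarRing L] [Field Ω] [StarRing Ω] [Algebra L Ω]
  [StarModule L Ω] {d : ι → L} {s t z : ι → Ω} {e : L} {j : ι} {u : Ω}

lemma star_mem_adjoin_image (hz : ∀ i, z i * star (z i) = algebraMap L Ω (d i))
    (hz0 : ∀ i, z i ≠ 0) (T : Set ι) {x : Ω} (hx : x ∈ adjoin L (z '' T)) :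
    star x ∈ adjoin L (z '' T) := by
  induction hx using adjoin_induction with
  | mem x hx =>
    obtain ⟨i, hi, rfl⟩ := hx
    rw [eq_div_of_mul_eq (hz0 i) ((mul_comm _ _).trans (hz i))]
    exact div_mem (IntermediateField.algebraMap_mem _ _) (subset_adjoin _ _ ⟨i, hi, rfl⟩)
  | algebraMap x => rw [← algebraMap_star_comm]; exact IntermediateField.algebraMap_mem _ _
  | add x y _ _ hx hy => rw [star_add]; exact add_mem hx hy
  | mul x y _ _ hx hy => rw [star_mul']; exact mul_mem hx hy
  | inv x _ hx => rw [star_inv₀]; exact inv_mem hx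

/-- The involution induced on an intermediate field stable under `star`. -/
abbrev starRingOfStarMem (E : IntermediateField L Ω) (hE : ∀ {x}, x ∈ E → star x ∈ E) :
    StarRing E where
  star x := ⟨star x.1, hE x.2⟩
  star_involutive _ := Subtype.ext (star_star _)
  star_mul _ _ := Subtype.ext (star_mul _ _)
  star_add _ _ := Subtype.ext (star_add _ _)

lemma exists_mul_star_eq_of_mem_adjoin_image
    (hz : ∀ i, z i * star (z i) = algebraMap L Ω (d i)) (hzi : AlgebraicIndependent L z)
    (T : Finset ι) {w : Ω} (hw : w ∈ adjoin L (z '' T)) (hwe : w * star w = algebraMap L Ω e) :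
    ∃ (c : L) (n : ι → ℕ), c * star c = e * ∏ i ∈ T, d i ^ n i := by
  classical
  induction T using Finset.induction_on generalizing e w with
  | empty =>
    rw [Finset.coe_empty, Set.image_empty, adjoin_empty] at hw
    obtain ⟨c, rfl⟩ := mem_bot.1 hw
    rw [← algebraMap_star_comm, ← map_mul] at hwe
    exact ⟨c, 0, by simpa using (algebraMap L Ω).injective hwe⟩
  | insert i T hi ih =>
    let E := adjoin L (z '' (T : Set ι))
    let _ : StarRing E := starRingOfStarMem E (star_mem_adjoin_image hz hzi.ne_zero T)
    have : StarModule E Ω := ⟨fun x y => star_mul' (x : Ω) y⟩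
    have htr : Transcendental E (z i) :=
      transcendental_adjoin_iff.2 (hzi.transcendental_adjoin (by simpa using hi))
    rw [Finset.coe_insert, Set.image_insert_eq, ← restrictScalars_adjoin_simple_adjoin] at hw
    have hdeg : (minpoly E⟮z i⟯ w).natDegree = 1 := minpoly.natDegree_eq_one_iff.2 ⟨⟨w, hw⟩, rfl⟩
    obtain ⟨c, n, hc, -⟩ := exists_mul_star_eq_pow_mul_pow (d := algebraMap L E (d i))
      (d' := algebraMap L E e) (hz i) hwe htr (isAlgebraic_algebraMap (⟨w, hw⟩ : E⟮z i⟯))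
    rw [hdeg, pow_one, ← map_pow, ← map_mul] at hc
    obtain ⟨c', n', hc'⟩ := ih c.2 (congrArg (algebraMap E Ω) hc)
    refine ⟨c', Function.update n' i n, ?_⟩
    rw [hc', Finset.prod_insert hi, Function.update_self, prod_pow_update_of_notMem d n' hi]
    ring

variable [Fintype ι]

lemma odd_finrank_adjoin_range_update [DecidableEq ι]
    (hd : ∀ (c : L) (e : ι → ℕ), c * star c = ∏ i, d i ^ e i → ∀ i, Even (e i))
    (hz : ∀ i, z i * star (z i) = algebraMap L Ω (d i)) (hu : u * star u = algebraMap L Ω (d j))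
    (hzi : AlgebraicIndependent L z) (hodd : Odd (Module.finrank (adjoin L (Set.range z)) Ω)) :
    Odd (Module.finrank (adjoin L (Set.range (Function.update z j u))) Ω) := by
  let E := adjoin L (z '' {j}ᶜ)
  let _ : StarRing E := starRingOfStarMem E (star_mem_adjoin_image hz hzi.ne_zero _)
  have : StarModule E Ω := ⟨fun x y => star_mul' (x : Ω) y⟩
  have hnorm : ∀ c : E, c * star c ≠ algebraMap L E (d j) := by
    intro c hc
    obtain ⟨c', n, hc'⟩ := exists_mul_star_eq_of_mem_adjoin_image hz hzi {j}ᶜ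
      (by simp) (congrArg (algebraMap E Ω) hc)
    have heven := hd c' (Function.update n j 1) (by
      rw [hc', Fintype.prod_eq_mul_prod_compl j, Function.update_self, pow_one,
        prod_pow_update_of_notMem d n (by simp)]) j
    simp at heven
  have htr : Transcendental E (z j) :=
    transcendental_adjoin_iff.2 (hzi.transcendental_adjoin (by simp))
  rw [← Function.update_eq_self j z, range_update_eq_insert,
    ← restrictScalars_adjoin_simple_adjoin] at hodd
  rw [range_update_eq_insert, ← restrictScalars_adjoin_simple_adjoin]
  exact odd_finrank_adjoin_simple (d := algebraMap L E (d j)) (hz j) hu hnorm htr hodd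

theorem isTranscendenceBasis_of_mul_star_eq
    (hd : ∀ (c : L) (e : ι → ℕ), c * star c = ∏ i, d i ^ e i → ∀ i, Even (e i))
    (ht : ∀ i, t i * star (t i) = algebraMap L Ω (d i))
    (hs : ∀ i, s i * star (s i) = algebraMap L Ω (d i))
    (hti : IsTranscendenceBasis L t) (htop : adjoin L (Set.range t) = ⊤) :
    IsTranscendenceBasis L s := by
  classical
  have key (S : Finset ι) : Odd (Module.finrank (adjoin L (Set.range (S.piecewise s t))) Ω) := by
    induction S using Finset.induction_on with
    | empty =>
      rw [Finset.piecewise_empty, htop, IntermediateField.finrank_top]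
      exact odd_one
    | insert j S _ ih =>
      have : FiniteDimensional (adjoin L (Set.range (S.piecewise s t))) Ω := .of_finrank_pos ih.pos
      have halg : Algebra.IsAlgebraic (adjoin L (Set.range (S.piecewise s t))) Ω := inferInstance
      rw [Finset.piecewise_insert]
      exact odd_finrank_adjoin_range_update hd
        (fun i => S.piecewise_cases s t (fun x => x * star x = algebraMap L Ω (d i)) (hs i) (ht i))
        (hs j) (isTranscendenceBasis_of_isAlgebraic_adjoin hti halg).1 ih
  have huniv := key Finset.univ
  rw [Finset.piecewise_univ] at huniv
  have : FiniteDimensional (adjoin L (Set.range s)) Ω := .of_finrank_pos huniv.pos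
  exact isTranscendenceBasis_of_isAlgebraic_adjoin hti inferInstance

end Incompressibility

/-- Sums of two squares in `R`; when `-1` is not a square in the field `R`, these are the norms from
`R(√-1)`. -/
def IsSumTwoSq {R : Type*} [Semiring R] (x : R) : Prop :=
  ∃ a b : R, x = a ^ 2 + b ^ 2

section Rational

lemma even_factorization_of_isSumTwoSq {q N : ℕ} (hq : q.Prime) (hq3 : q % 4 = 3)
    (hN : IsSumTwoSq (N : ℚ)) : Even (N.factorization q) := by
  obtain rfl | hN0 := eq_or_ne N 0
  · simp
  obtain ⟨u, v, h⟩ := hN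
  let D := u.den * v.den
  have hD : D ^ 2 ≠ 0 := pow_ne_zero _ (mul_ne_zero u.den_nz v.den_nz)
  have hint : ((N * D ^ 2 : ℕ) : ℤ) = (u.num * v.den) ^ 2 + (v.num * u.den) ^ 2 := by
    have hrat : ((N * D ^ 2 : ℕ) : ℚ) = (u.num * v.den) ^ 2 + (v.num * u.den) ^ 2 := by
      push_cast [D]
      rw [h, ← Rat.mul_den_eq_num u, ← Rat.mul_den_eq_num v]
      ring
    exact_mod_cast hrat
  have hnat : N * D ^ 2 = (u.num * v.den).natAbs ^ 2 + (v.num * u.den).natAbs ^ 2 := by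
    zify
    rw [sq_abs, sq_abs]
    exact_mod_cast hint
  have hfact : (N * D ^ 2).factorization q = N.factorization q + 2 * D.factorization q := by
    rw [Nat.factorization_mul hN0 hD, Nat.factorization_pow]
    rfl
  have heven : Even ((N * D ^ 2).factorization q) := by
    by_cases hdvd : q ∣ N * D ^ 2
    · rw [Nat.factorization_def _ hq]
      exact Nat.eq_sq_add_sq_iff.1 ⟨_, _, hnat⟩ q
        (Nat.mem_primeFactors.2 ⟨hq, hdvd, mul_ne_zero hN0 hD⟩) hq3
    · rw [Nat.factorization_eq_zero_of_not_dvd hdvd]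
      exact Even.zero
  simpa [hfact, Nat.even_add] using heven

lemma factorization_prod_pow_apply {ι : Type*} [Fintype ι] {p : ι → ℕ} (hp : ∀ i, (p i).Prime)
    (hpi : Function.Injective p) (e : ι → ℕ) (j : ι) :
    (∏ i, p i ^ e i).factorization (p j) = e j := by
  classical
  simp [Nat.factorization_prod_apply fun i _ => pow_ne_zero (e i) (hp i).ne_zero,
    (hp _).factorization, Finsupp.single_apply, hpi.eq_iff]

lemma even_of_isSumTwoSq_prod_neg_pow {ι : Type*} [Fintype ι] {p : ι → ℕ} (hp : ∀ i, (p i).Prime)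
    (hp3 : ∀ i, p i % 4 = 3) (hpi : Function.Injective p) {e : ι → ℕ}
    (h : IsSumTwoSq (∏ i, (-(p i : ℚ)) ^ e i)) (j : ι) : Even (e j) := by
  have habs : ∏ i, (-(p i : ℚ)) ^ e i = ((∏ i, p i ^ e i : ℕ) : ℚ) := by
    obtain ⟨a, b, hab⟩ := h
    rw [← abs_of_nonneg (hab ▸ by positivity : 0 ≤ ∏ i, (-(p i : ℚ)) ^ e i), Finset.abs_prod]
    push_cast
    exact Finset.prod_congr rfl fun i _ => by rw [abs_pow, abs_neg, Nat.abs_cast]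
  rw [habs] at h
  rw [← factorization_prod_pow_apply hp hpi e j]
  exact even_factorization_of_isSumTwoSq (hp j) (hp3 j) h

end Rational

/-! ### The function field of a product of conics -/

section RationalFunctionField

open IntermediateField

variable {ι L L' Ω : Type*} [Field L] [Field L'] [Field Ω] [Algebra L' Ω]

/-- The field of rational functions over `L` in the indeterminates `MvRatFunc.X i`. -/
abbrev MvRatFunc (ι L : Type*) [Field L] : Type _ := FractionRing (MvPolynomial ι L)

/-- The indeterminates of `MvRatFunc ι L`. -/
noncomputable abbrev MvRatFunc.X (L : Type*) [Field L] (i : ι) : MvRatFunc ι L :=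
  algebraMap (MvPolynomial ι L) _ (MvPolynomial.X i)

lemma MvRatFunc.adjoin_range_X : adjoin L (Set.range (X (ι := ι) L)) = ⊤ := by
  have hpoly (x : MvPolynomial ι L) :
      algebraMap _ (MvRatFunc ι L) x ∈ adjoin L (Set.range (X (ι := ι) L)) := by
    induction x using MvPolynomial.induction_on with
    | C a => exact IntermediateField.algebraMap_mem _ a
    | add p q hp hq => rw [map_add]; exact add_mem hp hq
    | mul_X p i hp => rw [map_mul]; exact mul_mem hp (subset_adjoin _ _ ⟨i, rfl⟩)
  refine eq_top_iff.2 fun x _ => ?_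
  obtain ⟨a, b, -, rfl⟩ := IsFractionRing.div_surjective (A := MvPolynomial ι L) x
  exact div_mem (hpoly a) (hpoly b)

lemma isTranscendenceBasis_of_adjoin_eq_top {F : Type*} [Field F] [Algebra F Ω] {x : ι → Ω}
    (hx : AlgebraicIndependent F x) (htop : adjoin F (Set.range x) = ⊤) :
    IsTranscendenceBasis F x := by
  rw [hx.isTranscendenceBasis_iff_isAlgebraic, ← isAlgebraic_adjoin_iff_top, htop]
  exact ⟨fun a => isAlgebraic_algebraMap (⟨a, mem_top⟩ : (⊤ : IntermediateField F Ω))⟩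

lemma MvRatFunc.isTranscendenceBasis_X : IsTranscendenceBasis L (X (ι := ι) L) :=
  isTranscendenceBasis_of_adjoin_eq_top
    ((MvPolynomial.algebraicIndependent_X ι L).map'
      (f := IsScalarTower.toAlgHom L (MvPolynomial ι L) (MvRatFunc ι L))
      (IsFractionRing.injective _ _))
    adjoin_range_X

lemma MvRatFunc.exists_ringHom (τ : L →+* L') {w : ι → Ω} (hw : AlgebraicIndependent L' w) :
    ∃ σ : MvRatFunc ι L →+* Ω, (∀ x, σ (algebraMap L _ x) = algebraMap L' Ω (τ x)) ∧
      ∀ i, σ (X L i) = w i := by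
  let φ : MvPolynomial ι L →+* Ω := (MvPolynomial.aeval w).toRingHom.comp (MvPolynomial.map τ)
  have hφ : Function.Injective φ :=
    Function.Injective.comp (g := MvPolynomial.aeval w) hw
      (MvPolynomial.map_injective τ τ.injective)
  have hlift := IsFractionRing.lift_algebraMap (K := MvRatFunc ι L) hφ
  refine ⟨IsFractionRing.lift hφ, fun x => ?_, fun i => ?_⟩
  · rw [IsScalarTower.algebraMap_apply L (MvPolynomial ι L), hlift]
    simp [φ, MvPolynomial.algebraMap_eq]
  · rw [hlift]
    simp [φ]

lemma MvRatFunc.exists_starRing [Finite ι] [StarRing L] {d : ι → L} (hd0 : ∀ i, d i ≠ 0)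
    (hsd : ∀ i, star (d i) = d i) :
    ∃ _ : StarRing (MvRatFunc ι L), StarModule L (MvRatFunc ι L) ∧
      ∀ i, X L i * star (X L i) = algebraMap L _ (d i) := by
  let w (i : ι) : MvRatFunc ι L := algebraMap L _ (d i) / X L i
  have hdΩ (i : ι) : algebraMap L (MvRatFunc ι L) (d i) ≠ 0 := by simpa using hd0 i
  have hwtop : adjoin L (Set.range w) = ⊤ := by
    rw [eq_top_iff, ← adjoin_range_X, adjoin_le_iff]
    rintro _ ⟨i, rfl⟩
    rw [← div_div_cancel₀ (hdΩ i) (b := X L i)]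
    exact div_mem (IntermediateField.algebraMap_mem _ _) (subset_adjoin _ _ ⟨i, rfl⟩)
  have hw : IsTranscendenceBasis L w := isTranscendenceBasis_of_isAlgebraic_adjoin
    isTranscendenceBasis_X (by rw [hwtop]; infer_instance)
  obtain ⟨σ, hσL, hσX⟩ := exists_ringHom (starRingEnd L) hw.1
  have hinv (x : MvRatFunc ι L) : σ (σ x) = x := by
    have hx : x ∈ adjoin L (Set.range (X L)) := adjoin_range_X (ι := ι) (L := L) ▸ mem_top
    induction hx using adjoin_induction with
    | mem x hx =>
      obtain ⟨i, rfl⟩ := hx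
      rw [hσX, map_div₀, hσL, hσX, starRingEnd_apply, hsd]
      exact div_div_cancel₀ (hdΩ i)
    | algebraMap x => rw [hσL, hσL, starRingEnd_self_apply]
    | add x y _ _ hx hy => rw [map_add, map_add, hx, hy]
    | mul x y _ _ hx hy => rw [map_mul, map_mul, hx, hy]
    | inv x _ hx => rw [map_inv₀, map_inv₀, hx]
  let _ : StarRing (MvRatFunc ι L) :=
    { star := σ
      star_involutive := hinv
      star_mul := fun x y => (map_mul σ x y).trans (mul_comm _ _)
      star_add := map_add σ }
  refine ⟨inferInstance, ⟨fun a x => ?_⟩, fun i => ?_⟩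
  · change σ (a • x) = star a • σ x
    rw [Algebra.smul_def, map_mul, hσL, Algebra.smul_def, starRingEnd_apply]
  · change X L i * σ (X L i) = _
    rw [hσX, mul_div_cancel₀ _ (isTranscendenceBasis_X.1.ne_zero i)]

end RationalFunctionField

section FixedField

variable {k Ω : Type*} [Field k] [Field Ω] [StarRing Ω] [Algebra k Ω] {J t : Ω} {d : k}

/-- The subfield of self-adjoint elements, for an involution that fixes `k`. -/
def starFixedField (hk : ∀ x : k, star (algebraMap k Ω x) = algebraMap k Ω x) :
    IntermediateField k Ω where
  carrier := {x | IsSelfAdjoint x}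
  mul_mem' hx hy := IsSelfAdjoint.mul hx hy
  add_mem' hx hy := IsSelfAdjoint.add hx hy
  algebraMap_mem' := hk
  inv_mem' _ hx := IsSelfAdjoint.inv₀ hx

lemma isSumTwoSq_starFixedField (hk : ∀ x : k, star (algebraMap k Ω x) = algebraMap k Ω x)
    (h2 : (2 : k) ≠ 0) (hJ : J ^ 2 = -1) (hsJ : star J = -J) (ht : t * star t = algebraMap k Ω d) :
    IsSumTwoSq (algebraMap k (starFixedField hk) d) := by
  have h2Ω : (2 : Ω) ≠ 0 := map_ofNat (algebraMap k Ω) 2 ▸ (map_ne_zero _).2 h2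
  have hJ0 : J ≠ 0 := by rintro rfl; simp at hJ
  refine ⟨⟨(t + star t) / 2, ?_⟩, ⟨(t - star t) / (2 * J), ?_⟩, Subtype.ext ?_⟩
  · change star _ = _
    simp [add_comm]
  · change star _ = _
    simp only [star_div₀, star_sub, star_star, star_mul', star_ofNat, hsJ]
    field
  · change algebraMap k Ω d = ((t + star t) / 2) ^ 2 + ((t - star t) / (2 * J)) ^ 2
    rw [← ht, div_pow, div_pow, mul_pow, hJ]
    field

lemma mul_star_eq_sq_add_sq {a b : Ω} (ha : IsSelfAdjoint a) (hb : IsSelfAdjoint b)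
    (hJ : J ^ 2 = -1) (hsJ : star J = -J) : (a + J * b) * star (a + J * b) = a ^ 2 + b ^ 2 := by
  rw [star_add, star_mul', ha, hb, hsJ]
  linear_combination -b ^ 2 * hJ

end FixedField

section FixedFieldTrdeg

open IntermediateField

universe u

lemma trdeg_eq_cardinalMk_of_isAlgebraic {F K Ω ι : Type u} [Field F] [Field K] [Field Ω]
    [Algebra F K] [Algebra K Ω] [Algebra F Ω] [IsScalarTower F K Ω] {s : ι → Ω}
    (hs : IsTranscendenceBasis F s) (halg : ∀ i, IsAlgebraic K (s i)) :
    Algebra.trdeg F K = Cardinal.mk ι := by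
  let s' (i : ι) : algebraicClosure K Ω := ⟨s i, mem_algebraicClosure_iff.2 (halg i)⟩
  have : IsScalarTower F (algebraicClosure K Ω) Ω := .of_algebraMap_eq fun _ => rfl
  have hs' : IsTranscendenceBasis F s' :=
    .of_comp (IsScalarTower.toAlgHom F _ Ω) (algebraMap (algebraicClosure K Ω) Ω).injective hs
  rw [hs'.cardinalMk_eq_trdeg, ← trdeg_add_eq F K (A := algebraicClosure K Ω),
    trdeg_eq_zero (R := K), add_zero]

variable {k L Ω ι : Type u} [Field k] [Field L] [Field Ω] [StarRing L] [StarRing Ω]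
  [Algebra k L] [Algebra k Ω] [Algebra L Ω] [IsScalarTower k L Ω] [StarModule L Ω]
  [Algebra.IsAlgebraic k L] [Fintype ι] {t : ι → Ω} {d : ι → k} {J : Ω}

lemma trdeg_eq_card_of_isSumTwoSq (hk : ∀ x : k, star (algebraMap k Ω x) = algebraMap k Ω x)
    (hd : ∀ (c : L) (e : ι → ℕ), c * star c = ∏ i, algebraMap k L (d i) ^ e i → ∀ i, Even (e i))
    (ht : ∀ i, t i * star (t i) = algebraMap L Ω (algebraMap k L (d i)))
    (hti : IsTranscendenceBasis L t) (htop : adjoin L (Set.range t) = ⊤)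
    (hJ : J ^ 2 = -1) (hsJ : star J = -J) (K₀ : IntermediateField k (starFixedField hk))
    (hK₀ : ∀ i, IsSumTwoSq (algebraMap k K₀ (d i))) :
    Algebra.trdeg k K₀ = Fintype.card ι := by
  choose a b hab using hK₀
  let s (i : ι) : Ω := algebraMap K₀ Ω (a i) + J * algebraMap K₀ Ω (b i)
  have hs (i : ι) : s i * star (s i) = algebraMap L Ω (algebraMap k L (d i)) := by
    refine (mul_star_eq_sq_add_sq (a i).1.2 (b i).1.2 hJ hsJ).trans ?_
    rw [← IsScalarTower.algebraMap_apply k L Ω]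
    exact (congrArg (algebraMap K₀ Ω) (hab i)).symm
  have hsk : IsTranscendenceBasis k s := (Algebra.IsAlgebraic.isTranscendenceBasis_iff k L).2
    (isTranscendenceBasis_of_mul_star_eq hd ht hs hti htop)
  have hJalg : IsAlgebraic K₀ J := (IsIntegral.of_pow two_pos (hJ ▸ isIntegral_one.neg)).isAlgebraic
  rw [← Cardinal.mk_fintype]
  exact trdeg_eq_cardinalMk_of_isAlgebraic hsk fun i =>
    (isAlgebraic_algebraMap (a i)).add (hJalg.mul (isAlgebraic_algebraMap (b i)))

end FixedFieldTrdeg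

section AdjoinSqrtNegOne

universe u

/-- The ring `k[√-1]`, which is a field when `-1` is not a square in `k`. -/
abbrev AdjoinSqrtNegOne (k : Type*) [Field k] : Type _ := QuadraticAlgebra k (-1) 0

namespace AdjoinSqrtNegOne

variable {k : Type u} [Field k]

lemma fact_of_not_isSquare (h : ¬ IsSquare (-1 : k)) : Fact (∀ r : k, r ^ 2 ≠ -1 + 0 * r) :=
  ⟨fun r hr => h ⟨r, by rw [← sq, hr, zero_mul, add_zero]⟩⟩

lemma star_algebraMap (x : k) :
    star (algebraMap k (AdjoinSqrtNegOne k) x) = algebraMap k (AdjoinSqrtNegOne k) x := by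
  ext <;> simp

lemma omega_sq : (QuadraticAlgebra.omega : AdjoinSqrtNegOne k) ^ 2 = -1 := by
  rw [sq]
  ext <;> simp [QuadraticAlgebra.re_one, QuadraticAlgebra.im_one]

lemma star_omega :
    star (QuadraticAlgebra.omega : AdjoinSqrtNegOne k) = -QuadraticAlgebra.omega := by
  ext <;> simp

lemma isSumTwoSq_of_mul_star_eq {c : AdjoinSqrtNegOne k} {x : k}
    (h : c * star c = algebraMap k _ x) : IsSumTwoSq x := by
  rw [← QuadraticAlgebra.algebraMap_norm_eq_mul_star] at h
  rw [← FaithfulSMul.algebraMap_injective k (AdjoinSqrtNegOne k) h, QuadraticAlgebra.norm_def]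
  exact ⟨c.re, c.im, by ring⟩

end AdjoinSqrtNegOne

theorem exists_field_trdeg_eq_card_of_isSumTwoSq {k : Type u} [Field k] (h2 : (2 : k) ≠ 0)
    (hns : ¬ IsSquare (-1 : k)) {ι : Type u} [Fintype ι] {d : ι → k} (hd0 : ∀ i, d i ≠ 0)
    (hd : ∀ e : ι → ℕ, IsSumTwoSq (∏ i, d i ^ e i) → ∀ i, Even (e i)) :
    ∃ (K : Type u) (_ : Field K) (_ : Algebra k K),
      (∀ i, IsSumTwoSq (algebraMap k K (d i))) ∧
      ∀ K₀ : IntermediateField k K, (∀ i, IsSumTwoSq (algebraMap k K₀ (d i))) →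
        Algebra.trdeg k K₀ = Fintype.card ι := by
  have := AdjoinSqrtNegOne.fact_of_not_isSquare hns
  let L := AdjoinSqrtNegOne k
  let Ω := MvRatFunc ι L
  obtain ⟨_, _, hX⟩ := MvRatFunc.exists_starRing (d := fun i => algebraMap k L (d i))
    (fun i => (map_ne_zero _).2 (hd0 i)) (fun i => AdjoinSqrtNegOne.star_algebraMap (d i))
  have hk (x : k) : star (algebraMap k Ω x) = algebraMap k Ω x := by
    rw [IsScalarTower.algebraMap_apply k L Ω, ← algebraMap_star_comm,
      AdjoinSqrtNegOne.star_algebraMap]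
  have hJ : algebraMap L Ω QuadraticAlgebra.omega ^ 2 = -1 := by
    rw [← map_pow, AdjoinSqrtNegOne.omega_sq, map_neg, map_one]
  have hsJ : star (algebraMap L Ω QuadraticAlgebra.omega) =
      -algebraMap L Ω QuadraticAlgebra.omega := by
    rw [← algebraMap_star_comm, AdjoinSqrtNegOne.star_omega, map_neg]
  have hnorm (c : L) (e : ι → ℕ) (hc : c * star c = ∏ i, algebraMap k L (d i) ^ e i) :
      ∀ i, Even (e i) :=
    hd e (AdjoinSqrtNegOne.isSumTwoSq_of_mul_star_eq (c := c) (by simpa only [map_prod, map_pow]))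
  exact ⟨starFixedField hk, inferInstance, inferInstance,
    fun i => isSumTwoSq_starFixedField hk h2 hJ hsJ (hX i),
    trdeg_eq_card_of_isSumTwoSq hk hnorm hX MvRatFunc.isTranscendenceBasis_X
      MvRatFunc.adjoin_range_X hJ hsJ⟩

end AdjoinSqrtNegOne

/-! ### Quaternion algebras -/

section Quaternion

lemma isSumTwoSq_of_isSquare_neg_one {F : Type*} [Field F] (h2 : (2 : F) ≠ 0)
    (h : IsSquare (-1 : F)) (x : F) : IsSumTwoSq x := by
  obtain ⟨i, hi⟩ := h
  refine ⟨(x + 1) / 2, i * (x - 1) / 2, ?_⟩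
  field_simp
  linear_combination (x - 1) ^ 2 * hi

open scoped Quaternion

lemma quaternion_isUnit_or_eq_zero {F : Type*} [Field F] (h2 : (2 : F) ≠ 0) {d : F}
    (hd : ¬ IsSumTwoSq d) (x : ℍ[F,-1,0,d]) : IsUnit x ∨ x = 0 := by
  have hns : ∀ a b : F, a ^ 2 + b ^ 2 = 0 → a = 0 ∧ b = 0 := by
    intro a b hab
    by_cases hb : b = 0
    · exact ⟨by simpa [hb] using hab, hb⟩
    · refine absurd (isSumTwoSq_of_isSquare_neg_one h2 ⟨a / b, ?_⟩ d) hd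
      field_simp
      linear_combination -hab
  have hnorm : x * star x = ((x.re ^ 2 + x.imI ^ 2 - d * (x.imJ ^ 2 + x.imK ^ 2) : F) :) := by
    rw [QuaternionAlgebra.mul_star_eq_coe, QuaternionAlgebra.coe_inj]
    simp only [QuaternionAlgebra.re_mul, QuaternionAlgebra.re_star, QuaternionAlgebra.imI_star,
      QuaternionAlgebra.imJ_star, QuaternionAlgebra.imK_star]
    ring
  by_cases hx : x.re ^ 2 + x.imI ^ 2 - d * (x.imJ ^ 2 + x.imK ^ 2) = 0
  · right
    by_cases hjk : x.imJ ^ 2 + x.imK ^ 2 = 0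
    · obtain ⟨hj, hk⟩ := hns _ _ hjk
      obtain ⟨hr, hi⟩ := hns x.re x.imI (by simpa [hjk] using hx)
      ext <;> simpa
    · refine absurd ⟨(x.re * x.imJ + x.imI * x.imK) / (x.imJ ^ 2 + x.imK ^ 2),
        (x.re * x.imK - x.imI * x.imJ) / (x.imJ ^ 2 + x.imK ^ 2), ?_⟩ hd
      field_simp
      linear_combination -(x.imJ ^ 2 + x.imK ^ 2) * hx
  · left
    have hunit := (IsUnit.mk0 _ hx).map (algebraMap F ℍ[F,-1,0,d])
    rw [QuaternionAlgebra.coe_algebraMap, ← hnorm] at hunit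
    exact ((show Commute x (star x) from (star_comm_self' x).symm).isUnit_mul_iff.1 hunit).1

lemma isSumTwoSq_of_mul_self_eq {F V : Type*} [Field F] (h2 : (2 : F) ≠ 0) [AddCommGroup V]
    [Module F V] (hV : ¬ 4 ∣ Module.finrank F V) {d : F} {Y W : Module.End F V}
    (hY : Y * Y = -1) (hW : W * W = d • 1) (hYW : Y * W = -(W * Y)) : IsSumTwoSq d := by
  by_contra hd
  let q : QuaternionAlgebra.Basis (Module.End F V) (-1 : F) 0 d :=
    { i := Y
      j := W
      k := Y * W
      i_mul_i := by simp [hY]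
      j_mul_j := hW
      i_mul_j := rfl
      j_mul_i := by simp [hYW] }
  let D := ℍ[F,-1,0,d]
  let _ : DivisionRing D := .ofIsUnitOrEqZero (quaternion_isUnit_or_eq_zero h2 hd)
  let _ : Module D V := Module.compHom V q.liftHom.toRingHom
  have : IsScalarTower F D V := ⟨fun a x v => by
    change q.liftHom (a • x) v = a • q.liftHom x v
    rw [map_smul, LinearMap.smul_apply]⟩
  apply hV
  rw [← Module.finrank_mul_finrank F D V, QuaternionAlgebra.finrank_eq_four]
  exact dvd_mul_right _ _

end Quaternion

section QuaternionPair

/-- `Y` and `W` generate a copy of the quaternion algebra `(-1, d)` in the corner of `R` cut out by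
the idempotent `(1 - Y ^ 2) / 2`; on the complementary corner `Y ^ 2 = 1` and `W ^ 2 = 0`. -/
structure IsQuaternionPair {R : Type*} [Ring R] (Y W : R) (d : ℤ) : Prop where
  pow_four : Y ^ 4 = 1
  anticomm : Y * W = -(W * Y)
  two_smul_sq : (2 : ℤ) • W ^ 2 = d • (1 - Y ^ 2)

namespace IsQuaternionPair

lemma one_zero {R : Type*} [Ring R] (d : ℤ) : IsQuaternionPair (1 : R) 0 d :=
  ⟨by simp, by simp, by simp⟩

lemma of_sq_eq {R : Type*} [Ring R] {Y W : R} {d : ℤ} (hY : Y ^ 2 = -1) (hW : W ^ 2 = d)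
    (hYW : Y * W = -(W * Y)) : IsQuaternionPair Y W d where
  pow_four := by rw [show 4 = 2 * 2 from rfl, pow_mul, hY, neg_one_sq]
  anticomm := hYW
  two_smul_sq := by
    rw [hY, hW, sub_neg_eq_add, one_add_one_eq_two, zsmul_eq_mul, zsmul_eq_mul, Int.cast_ofNat,
      (Int.cast_commute d (2 : R)).eq]

lemma pi {ι : Type*} {R : ι → Type*} [∀ i, Ring (R i)] {Y W : ∀ i, R i} {d : ℤ}
    (h : ∀ i, IsQuaternionPair (Y i) (W i) d) : IsQuaternionPair Y W d :=
  ⟨funext fun i => (h i).pow_four, funext fun i => (h i).anticomm,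
    funext fun i => (h i).two_smul_sq⟩

lemma map {R S : Type*} [Ring R] [Ring S] {Y W : R} {d : ℤ} (h : IsQuaternionPair Y W d)
    (f : R →+* S) : IsQuaternionPair (f Y) (f W) d where
  pow_four := by rw [← map_pow, h.pow_four, map_one]
  anticomm := by rw [← map_mul, h.anticomm, map_neg, map_mul]
  two_smul_sq := by
    rw [← map_pow, ← map_zsmul, h.two_smul_sq, map_zsmul, map_sub, map_one, map_pow]

lemma of_map {R S : Type*} [Ring R] [Ring S] {Y W : R} {d : ℤ} {f : R →+* S}
    (hf : Function.Injective f) (h : IsQuaternionPair (f Y) (f W) d) : IsQuaternionPair Y W d where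
  pow_four := hf (by rw [map_pow, h.pow_four, map_one])
  anticomm := hf (by rw [map_mul, h.anticomm, map_neg, map_mul])
  two_smul_sq := hf (by
    rw [map_zsmul, map_pow, h.two_smul_sq, map_zsmul, map_sub, map_one, map_pow])

lemma commute_sq {R : Type*} [Ring R] {Y W : R} {d : ℤ} (h : IsQuaternionPair Y W d) :
    Commute (Y ^ 2) W := by
  rw [commute_iff_eq, sq, mul_assoc, h.anticomm, mul_neg, ← mul_assoc, h.anticomm, neg_mul, neg_neg,
    mul_assoc]

end IsQuaternionPair

lemma IsQuaternionPair.isProj {F V : Type*} [Field F] (h2 : (2 : F) ≠ 0) [AddCommGroup V]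
    [Module F V] {Y W : Module.End F V} {d : ℤ} (h : IsQuaternionPair Y W d) :
    LinearMap.IsProj (LinearMap.ker (1 + Y ^ 2)) ((2 : F)⁻¹ • (1 - Y ^ 2)) where
  map_mem v := by
    have hmul : (1 + Y ^ 2) * (1 - Y ^ 2) = 0 := by
      rw [mul_sub, mul_one, add_mul, one_mul, ← pow_add, h.pow_four, sub_eq_zero, add_comm]
    rw [LinearMap.smul_apply, LinearMap.mem_ker, map_smul, ← Module.End.mul_apply, hmul,
      LinearMap.zero_apply, smul_zero]
  map_id v hv := by
    rw [LinearMap.mem_ker, LinearMap.add_apply, Module.End.one_apply, add_comm,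
      add_eq_zero_iff_eq_neg] at hv
    rw [LinearMap.smul_apply, LinearMap.sub_apply, Module.End.one_apply, hv, sub_neg_eq_add,
      ← two_smul F v, inv_smul_smul₀ h2]

lemma IsQuaternionPair.isSumTwoSq {F V : Type*} [Field F] [CharZero F] [AddCommGroup V]
    [Module F V] [FiniteDimensional F V] {Y W : Module.End F V} {d : ℤ}
    (h : IsQuaternionPair Y W d) {m : ℕ} (hm : ¬ 4 ∣ m)
    (htr : LinearMap.trace F V (1 - Y ^ 2) = 2 * m) : IsSumTwoSq (d : F) := by
  let S := LinearMap.ker (1 + Y ^ 2)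
  have hS {v : V} : v ∈ S ↔ Y (Y v) = -v := by
    rw [← add_eq_zero_iff_eq_neg, add_comm]
    simp only [S, sq, LinearMap.mem_ker, LinearMap.add_apply, Module.End.one_apply,
      Module.End.mul_apply]
  have hYS : ∀ v ∈ S, Y v ∈ S := fun v hv => by rw [hS, hS.1 hv, map_neg]
  have hWS : ∀ v ∈ S, W v ∈ S := fun v hv => by
    have hcomm : Y (Y (W v)) = W (Y (Y v)) := by
      simpa only [sq, Module.End.mul_apply] using LinearMap.congr_fun h.commute_sq.eq v
    rw [hS, hcomm, hS.1 hv, map_neg]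
  have hfin : Module.finrank F S = m := by
    have htrace := (h.isProj two_ne_zero).trace
    rw [map_smul, htr, smul_eq_mul, inv_mul_cancel_left₀ two_ne_zero] at htrace
    exact_mod_cast htrace.symm
  refine isSumTwoSq_of_mul_self_eq (V := S) two_ne_zero (by rwa [hfin])
    (Y := Y.restrict hYS) (W := W.restrict hWS) ?_ ?_ ?_
  · ext v
    exact hS.1 v.2
  · ext v
    have hW : (2 : ℤ) • W (W v) = d • (v - Y (Y v)) := by
      simpa only [sq, LinearMap.smul_apply, LinearMap.sub_apply, Module.End.mul_apply,
        Module.End.one_apply] using LinearMap.congr_fun h.two_smul_sq (v : V)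
    rw [hS.1 v.2, sub_neg_eq_add, ← two_zsmul, smul_comm, ← Int.cast_smul_eq_zsmul F 2,
      ← Int.cast_smul_eq_zsmul F 2, ← Int.cast_smul_eq_zsmul F d, Int.cast_ofNat] at hW
    exact smul_right_injective V two_ne_zero hW
  · ext v
    exact LinearMap.congr_fun h.anticomm v

lemma IsQuaternionPair.isSumTwoSq_of_matrix {F : Type*} [Field F] [CharZero F] {n : Type*}
    [Fintype n] [DecidableEq n] {Y W : Matrix n n F} {d : ℤ} (h : IsQuaternionPair Y W d) {m : ℕ}
    (hm : ¬ 4 ∣ m) (htr : Matrix.trace (1 - Y ^ 2) = 2 * (m : F)) : IsSumTwoSq (d : F) := by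
  let f := Matrix.toLinAlgEquiv' (R := F) (n := n)
  refine (h.map f.toRingEquiv.toRingHom).isSumTwoSq hm ?_
  rw [← htr, ← Matrix.trace_toLin'_eq]
  change LinearMap.trace F _ (1 - f Y ^ 2) = LinearMap.trace F _ (f (1 - Y ^ 2))
  rw [map_sub f, map_one f, map_pow f]

end QuaternionPair

/-! ### Quadratic Gauss sums -/

section GaussSum

variable {p : ℕ} [Fact p.Prime]

/-- The quadratic Gauss sum of an element `z` with `z ^ p = 1` of an arbitrary ring; unlike for
`gaussSum`, neither commutativity nor primitivity of `z` is built in. -/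
def quadraticGaussSum (p : ℕ) [Fact p.Prime] {R : Type*} [Ring R] (z : R) : R :=
  ∑ i : ZMod p, quadraticChar (ZMod p) i • z ^ i.val

lemma map_quadraticGaussSum {R S : Type*} [Ring R] [Ring S] (f : R →+* S) (z : R) :
    f (quadraticGaussSum p z) = quadraticGaussSum p (f z) := by
  simp only [quadraticGaussSum, map_sum, map_zsmul, map_pow]

lemma quadraticGaussSum_one (hp : p ≠ 2) {R : Type*} [Ring R] :
    quadraticGaussSum p (1 : R) = 0 := by
  have hsum := MulChar.sum_eq_zero_of_ne_one
    (quadraticChar_ne_one (F := ZMod p) (by rwa [ZMod.ringChar_zmod_n]))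
  simp only [quadraticGaussSum, one_pow, ← Finset.sum_smul, hsum, zero_smul]

lemma commute_quadraticGaussSum {R : Type*} [Ring R] (z : R) :
    Commute z (quadraticGaussSum p z) :=
  Commute.sum_right _ _ _ fun _ _ => ((Commute.refl z).pow_right _).smul_right _

lemma quadraticGaussSum_eq_gaussSum {L : Type*} [Field L] {ζ : L} (hζ : ζ ^ p = 1) :
    quadraticGaussSum p ζ = gaussSum ((quadraticChar (ZMod p)).ringHomComp (Int.castRingHom L))
      (AddChar.zmodChar p hζ) := by
  simp only [quadraticGaussSum, gaussSum, zsmul_eq_mul]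
  rfl

lemma quadraticChar_neg_one_of_mod_four_eq_three (hp3 : p % 4 = 3) :
    quadraticChar (ZMod p) (-1) = -1 := by
  rw [quadraticChar_neg_one_iff_not_isSquare, ZMod.exists_sq_eq_neg_one_iff]
  simpa using hp3

lemma quadraticGaussSum_sq (hp3 : p % 4 = 3) {L : Type*} [Field L] [CharZero L] {ζ : L}
    (hζ : IsPrimitiveRoot ζ p) : quadraticGaussSum p ζ ^ 2 = -p := by
  have hp2 : ringChar (ZMod p) ≠ 2 := by
    rw [ZMod.ringChar_zmod_n]
    lia
  rw [quadraticGaussSum_eq_gaussSum hζ.pow_eq_one,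
    gaussSum_sq ((MulChar.ringHomComp_ne_one_iff (RingHom.injective_int _)).2
      (quadraticChar_ne_one hp2)) ((quadraticChar_isQuadratic _).comp _)
      (AddChar.zmodChar_primitive_of_primitive_root p hζ),
    MulChar.ringHomComp_apply, quadraticChar_neg_one_of_mod_four_eq_three hp3, ZMod.card]
  simp

lemma quadraticGaussSum_inv (hp3 : p % 4 = 3) {L : Type*} [Field L] {ζ : L} (hζ : ζ ^ p = 1) :
    quadraticGaussSum p ζ⁻¹ = -quadraticGaussSum p ζ := by
  simp only [quadraticGaussSum, ← Finset.sum_neg_distrib]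
  refine Fintype.sum_equiv (Equiv.neg _) _ _ fun i => ?_
  have hchar : quadraticChar (ZMod p) (-i) = -quadraticChar (ZMod p) i := by
    rw [← neg_one_mul, map_mul, quadraticChar_neg_one_of_mod_four_eq_three hp3, neg_one_mul]
  have hpow : ζ ^ (-i).val = ζ⁻¹ ^ i.val := by
    simpa only [AddChar.zmodChar_apply, inv_pow] using (AddChar.zmodChar p hζ).map_neg_eq_inv i
  rw [Equiv.neg_apply, hchar, hpow, neg_smul, neg_neg]

end GaussSum

section Cyclotomic

open IsCyclotomicExtension in
lemma exists_algEquiv_zeta_eq_inv (p : ℕ) [NeZero p] (L : Type*) [Field L] [Algebra ℚ L]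
    [IsCyclotomicExtension {p} ℚ L] :
    ∃ σ : L ≃ₐ[ℚ] L, σ (zeta p ℚ L) = (zeta p ℚ L)⁻¹ ∧ ∀ x, σ (σ x) = x := by
  have hζ := zeta_spec p ℚ L
  let σ := fromZetaAut hζ.inv (Polynomial.cyclotomic.irreducible_rat (NeZero.pos p))
  have hσ : σ (zeta p ℚ L) = (zeta p ℚ L)⁻¹ := fromZetaAut_spec _ _
  have hσσ : (σ : L →ₐ[ℚ] L).comp (σ : L →ₐ[ℚ] L) = AlgHom.id ℚ L :=
    (hζ.powerBasis ℚ).algHom_ext (by simp [hσ])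
  exact ⟨σ, hσ, DFunLike.congr_fun hσσ⟩

-- `Z` and `C` are multiplication by a primitive root of unity and complex conjugation.
lemma exists_end_quadraticGaussSum {p : ℕ} [Fact p.Prime] (hp3 : p % 4 = 3) (L : Type*) [Field L]
    [Algebra ℚ L] [IsCyclotomicExtension {p} ℚ L] :
    ∃ Z C : Module.End ℚ L, Z ^ p = 1 ∧ C ^ 2 = 1 ∧ Z * C * Z = C ∧
      quadraticGaussSum p Z ^ 2 = -p ∧
      C * quadraticGaussSum p Z = -(quadraticGaussSum p Z * C) := by
  have : CharZero L := algebraRat.charZero L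
  have hζ := IsCyclotomicExtension.zeta_spec p ℚ L
  set ζ := IsCyclotomicExtension.zeta p ℚ L
  obtain ⟨σ, hσζ, hσσ⟩ := exists_algEquiv_zeta_eq_inv p L
  let μ : L →+* Module.End ℚ L := (Algebra.lmul ℚ L).toRingHom
  have hσW : σ (quadraticGaussSum p ζ) = -quadraticGaussSum p ζ := by
    rw [← quadraticGaussSum_inv hp3 hζ.pow_eq_one, ← hσζ]
    exact map_quadraticGaussSum (σ : L →+* L) ζ
  refine ⟨μ ζ, σ.toLinearMap, ?_, LinearMap.ext hσσ, LinearMap.ext fun x => ?_, ?_, ?_⟩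
  · rw [← map_pow, hζ.pow_eq_one, map_one]
  · change ζ * σ (ζ * x) = σ x
    rw [map_mul, hσζ, mul_inv_cancel_left₀ (hζ.ne_zero (NeZero.ne p))]
  · rw [← map_quadraticGaussSum, ← map_pow, quadraticGaussSum_sq hp3 hζ, map_neg, map_natCast]
  · rw [← map_quadraticGaussSum]
    ext x
    change σ (_ * x) = -(_ * σ x)
    rw [map_mul, hσW, neg_mul]

lemma exists_rat_matrix_quadraticGaussSum {p : ℕ} [Fact p.Prime] (hp3 : p % 4 = 3) :
    ∃ Z C : Matrix (Fin (p - 1)) (Fin (p - 1)) ℚ, Z ^ p = 1 ∧ C ^ 2 = 1 ∧ Z * C * Z = C ∧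
      quadraticGaussSum p Z ^ 2 = -p ∧
      C * quadraticGaussSum p Z = -(quadraticGaussSum p Z * C) := by
  -- On `CyclotomicField p ℚ` itself, instance search would find another `ℚ`-algebra structure.
  obtain ⟨L, _, _, _⟩ : ∃ (L : Type) (_ : Field L) (_ : Algebra ℚ L),
      IsCyclotomicExtension {p} ℚ L :=
    ⟨CyclotomicField p ℚ, inferInstance, CyclotomicField.algebra p ℚ, inferInstance⟩
  have : FiniteDimensional ℚ L := IsCyclotomicExtension.finiteDimensional {p} ℚ L
  have hrank : Module.finrank ℚ L = p - 1 := by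
    rw [IsCyclotomicExtension.finrank L
      (Polynomial.cyclotomic.irreducible_rat (NeZero.pos p)), Nat.totient_prime Fact.out]
  let θ : Module.End ℚ L →+* Matrix (Fin (p - 1)) (Fin (p - 1)) ℚ :=
    (LinearMap.toMatrixAlgEquiv (Module.finBasisOfFinrankEq ℚ L hrank)).toRingEquiv.toRingHom
  obtain ⟨Z, C, hZ, hC, hZC, hW, hCW⟩ := exists_end_quadraticGaussSum hp3 L
  refine ⟨θ Z, θ C, ?_, ?_, ?_, ?_, ?_⟩
  · rw [← map_pow, hZ, map_one]
  · rw [← map_pow, hC, map_one]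
  · rw [← map_mul, ← map_mul, hZC]
  · rw [← map_quadraticGaussSum, ← map_pow, hW, map_neg, map_natCast]
  · rw [← map_quadraticGaussSum, ← map_mul, hCW, map_neg, map_mul]

end Cyclotomic

section Twist

lemma exists_sq_add_mul_sq_eq_neg_one {K : Type*} [Field K] {c : K} (hc : c ≠ 0)
    (h : IsSumTwoSq (-c)) : ∃ x y : K, x ^ 2 + c * y ^ 2 = -1 := by
  obtain ⟨a, b, hab⟩ := h
  wlog hb : b ≠ 0 generalizing a b
  · refine this b a (by rw [hab, add_comm]) ?_
    rintro rfl
    simp_all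
  refine ⟨a / b, 1 / b, ?_⟩
  field_simp
  linear_combination -hab

lemma twist_conj_relations {K A : Type*} [CommRing K] [Ring A] [Algebra K A] {x y c : K}
    (hxy : x ^ 2 + c * y ^ 2 = -1) {Z C W : A} (hZW : Commute Z W) (hC : C ^ 2 = 1)
    (hZC : Z * C * Z = C) (hW : W ^ 2 = algebraMap K A (-c)) (hCW : C * W = -(W * C)) :
    ((x • 1 + y • W) * C) ^ 2 = -1 ∧
      Z * ((x • 1 + y • W) * C) * Z = (x • 1 + y • W) * C ∧
      ((x • 1 + y • W) * C) * W = -(W * ((x • 1 + y • W) * C)) := by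
  have hZT : Commute Z (x • 1 + y • W) :=
    ((Commute.one_right Z).smul_right x).add_right (hZW.smul_right y)
  have hWT : Commute W (x • 1 + y • W) :=
    ((Commute.one_right W).smul_right x).add_right ((Commute.refl W).smul_right y)
  have hCT : C * (x • 1 + y • W) = (x • 1 - y • W) * C := by
    simp only [mul_add, sub_mul, mul_smul_comm, smul_mul_assoc, hCW, mul_one, one_mul, smul_neg,
      ← sub_eq_add_neg]
  refine ⟨?_, ?_, ?_⟩
  · calc ((x • 1 + y • W) * C) ^ 2
        = (x • 1 + y • W) * (C * (x • 1 + y • W)) * C := by rw [sq]; noncomm_ring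
      _ = (x • 1 + y • W) * (x • 1 - y • W) * C ^ 2 := by rw [hCT, sq]; noncomm_ring
      _ = x ^ 2 • 1 - y ^ 2 • W ^ 2 := by
        rw [hC, mul_one]
        simp only [add_mul, mul_sub, smul_mul_assoc, mul_smul_comm, mul_one, one_mul, sq W]
        module
      _ = (x ^ 2 + c * y ^ 2) • 1 := by rw [hW, Algebra.algebraMap_eq_smul_one]; module
      _ = -1 := by rw [hxy, neg_smul, one_smul]
  · calc Z * ((x • 1 + y • W) * C) * Z = (Z * (x • 1 + y • W)) * C * Z := by noncomm_ring
      _ = (x • 1 + y • W) * (Z * C * Z) := by rw [hZT.eq]; noncomm_ring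
      _ = (x • 1 + y • W) * C := by rw [hZC]
  · rw [mul_assoc, hCW, mul_neg, ← mul_assoc, ← hWT.eq, mul_assoc]

lemma exists_isQuaternionPair_quadraticGaussSum {p : ℕ} [Fact p.Prime] (hp3 : p % 4 = 3)
    {K : Type*} [Field K] [CharZero K] (h : IsSumTwoSq (-(p : K))) :
    ∃ Z Y : Matrix (Fin (p - 1)) (Fin (p - 1)) K, Z ^ p = 1 ∧ Y ^ 2 = -1 ∧ Z * Y * Z = Y ∧
      IsQuaternionPair Y (quadraticGaussSum p Z) (-p) := by
  obtain ⟨x, y, hxy⟩ := exists_sq_add_mul_sq_eq_neg_one (NeZero.ne (p : K)) h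
  obtain ⟨Z, C, hZ, hC, hZC, hW, hCW⟩ := exists_rat_matrix_quadraticGaussSum hp3
  let θ := (algebraMap ℚ K).mapMatrix (m := Fin (p - 1))
  obtain ⟨hY, hZY, hYW⟩ := twist_conj_relations (Z := θ Z) (C := θ C)
    (W := quadraticGaussSum p (θ Z)) hxy (commute_quadraticGaussSum _)
    (by rw [← map_pow, hC, map_one]) (by rw [← map_mul, ← map_mul, hZC])
    (by rw [← map_quadraticGaussSum, ← map_pow, hW]; simp)
    (by rw [← map_quadraticGaussSum, ← map_mul, hCW, map_neg, map_mul])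
  refine ⟨θ Z, _, by rw [← map_pow, hZ, map_one], hY, hZY, .of_sq_eq hY ?_ hYW⟩
  rw [← map_quadraticGaussSum, ← map_pow, hW]
  simp

end Twist

/-! ### Descent of representations -/

section Group

lemma finite_zpowers_sup_zpowers {G : Type*} [Group G] {y z : G} (hy : IsOfFinOrder y)
    (hz : IsOfFinOrder z) (h : z * y * z = y) :
    Finite ↥(Subgroup.zpowers y ⊔ Subgroup.zpowers z) := by
  have hconj : y * z * y⁻¹ = z⁻¹ := by
    refine eq_inv_of_mul_eq_one_right ?_
    rw [← mul_assoc, ← mul_assoc, h, mul_inv_cancel]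
  have hnormal : Subgroup.zpowers y ≤ Subgroup.normalizer (Subgroup.zpowers z) := by
    rw [Subgroup.zpowers_le, Subgroup.mem_normalizer_iff_map_conj_eq, MonoidHom.map_zpowers]
    simp [hconj]
  refine Set.Finite.to_subtype ?_
  rw [Subgroup.coe_mul_of_left_le_normalizer_right _ _ hnormal]
  exact (finite_zpowers.2 hy).mul (finite_zpowers.2 hz)

lemma exists_finite_subgroup_isQuaternionPair {p : ℕ} [Fact p.Prime] (hp3 : p % 4 = 3)
    {K : Type*} [Field K] [CharZero K] (h : IsSumTwoSq (-(p : K))) :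
    ∃ (H : Subgroup (GL (Fin (p - 1)) K)) (_ : Finite H) (y z : H), (y.1.1 ^ 2 = -1) ∧
      IsQuaternionPair y.1.1 (quadraticGaussSum p z.1.1) (-p) := by
  obtain ⟨Z, Y, hZ, hY, hZY, hpair⟩ := exists_isQuaternionPair_quadraticGaussSum hp3 h
  let z : GL (Fin (p - 1)) K := Units.ofPowEqOne Z p hZ (NeZero.ne p)
  let y : GL (Fin (p - 1)) K := Units.ofPowEqOne Y 4 hpair.pow_four four_ne_zero
  have hfin := finite_zpowers_sup_zpowers (y := y) (z := z)
    (isOfFinOrder_iff_pow_eq_one.2 ⟨4, four_pos, Units.ext hpair.pow_four⟩)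
    (isOfFinOrder_iff_pow_eq_one.2 ⟨p, NeZero.pos p, Units.ext hZ⟩) (Units.ext hZY)
  exact ⟨_, hfin, ⟨y, Subgroup.mem_sup_left (Subgroup.mem_zpowers y)⟩,
    ⟨z, Subgroup.mem_sup_right (Subgroup.mem_zpowers z)⟩, hY, hpair⟩

end Group

section Descent

lemma exists_ringHom_of_descends {k K : Type*} [Field k] [Field K] [Algebra k K] {G : Type*}
    [Group G] {n : ℕ} {ρ : G →* GL (Fin n) K} {K₀ : IntermediateField k K} (h : Descends ρ K₀) :
    ∃ (ρ' : G →* GL (Fin n) K₀) (Φ : Matrix (Fin n) (Fin n) K₀ →+* Matrix (Fin n) (Fin n) K),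
      Function.Injective Φ ∧ (∀ A, (Φ A).trace = algebraMap K₀ K A.trace) ∧
        ∀ g, Φ (ρ' g).1 = (ρ g).1 := by
  obtain ⟨ρ', M, hM⟩ := h
  let conj : Matrix (Fin n) (Fin n) K ≃+* Matrix (Fin n) (Fin n) K :=
    MulSemiringAction.toRingEquiv (ConjAct (GL (Fin n) K)) _ (ConjAct.toConjAct M)
  refine ⟨ρ', conj.toRingHom.comp (algebraMap K₀ K).mapMatrix, ?_, fun A => ?_, fun g => ?_⟩
  · exact conj.injective.comp (Matrix.map_injective (algebraMap K₀ K).injective)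
  · change Matrix.trace (M.1 * (algebraMap K₀ K).mapMatrix A * M⁻¹.1) = _
    rw [Matrix.trace_mul_comm, Units.inv_mul_cancel_left]
    exact (AddMonoidHom.map_trace (algebraMap K₀ K) A).symm
  · rw [hM]
    rfl

lemma isSumTwoSq_of_descends {k K : Type*} [Field k] [Field K] [CharZero K] [Algebra k K]
    {G : Type*} [Group G] {n : ℕ} {ρ : G →* GL (Fin n) K} {K₀ : IntermediateField k K}
    (h : Descends ρ K₀) {p : ℕ} [Fact p.Prime] {y z : G} {d : ℤ}
    (hpair : IsQuaternionPair (ρ y).1 (quadraticGaussSum p (ρ z).1) d) {m : ℕ} (hm : ¬ 4 ∣ m)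
    (htr : (1 - (ρ y).1 ^ 2).trace = 2 * (m : K)) : IsSumTwoSq (d : K₀) := by
  have : CharZero K₀ := (algebraMap K₀ K).charZero
  obtain ⟨ρ', Φ, hinj, htrace, hρ⟩ := exists_ringHom_of_descends h
  rw [← hρ, ← hρ, ← map_quadraticGaussSum] at hpair
  refine (hpair.of_map hinj).isSumTwoSq_of_matrix hm ((algebraMap K₀ K).injective ?_)
  rw [← htrace, map_sub, map_one, map_pow, hρ, htr, map_mul, map_ofNat, map_natCast]

end Descent

section Block

/-- Block-diagonal matrices with blocks of sizes `m 0, …, m (l - 1)`. -/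
def blockDiagonalHom (R : Type*) [Ring R] {l : ℕ} (m : Fin l → ℕ) :
    (∀ j, Matrix (Fin (m j)) (Fin (m j)) R) →+*
      Matrix (Fin (∑ j, m j)) (Fin (∑ j, m j)) R :=
  (Matrix.reindexRingEquiv R finSigmaFinEquiv).toRingHom.comp (Matrix.blockDiagonal'RingHom _ R)

lemma trace_blockDiagonalHom {R : Type*} [Ring R] {l : ℕ} {m : Fin l → ℕ}
    (A : ∀ j, Matrix (Fin (m j)) (Fin (m j)) R) :
    (blockDiagonalHom R m A).trace = ∑ j, (A j).trace := by
  rw [← Matrix.trace_blockDiagonal']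
  exact finSigmaFinEquiv.symm.sum_comp fun i => Matrix.blockDiagonal' A i i

/-- The direct sum of the tautological representations of subgroups `H j` of `GL (m j)`. -/
def blockRep {K : Type*} [CommRing K] {l : ℕ} {m : Fin l → ℕ}
    (H : ∀ j, Subgroup (GL (Fin (m j)) K)) : (∀ j, H j) →* GL (Fin (∑ j, m j)) K :=
  ((blockDiagonalHom K m).toMonoidHom.comp
    (MonoidHom.pi fun j => (Units.coeHom _).comp
      ((H j).subtype.comp (Pi.evalMonoidHom _ j)))).toHomUnits

lemma coe_blockRep_mulSingle {K : Type*} [CommRing K] {l : ℕ} {m : Fin l → ℕ}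
    (H : ∀ j, Subgroup (GL (Fin (m j)) K)) (j : Fin l) (g : H j) :
    (blockRep H (Pi.mulSingle j g)).1 = blockDiagonalHom K m (Pi.mulSingle j g.1.1) := by
  refine congrArg (blockDiagonalHom K m) (funext fun i => ?_)
  obtain rfl | hij := eq_or_ne i j
  · simp
  · simp [Pi.mulSingle_eq_of_ne hij]

lemma IsQuaternionPair.mulSingle {p : ℕ} [Fact p.Prime] (hp : p ≠ 2) {ι : Type*} [DecidableEq ι]
    {R : ι → Type*} [∀ i, Ring (R i)] {j : ι} {Y Z : R j} {d : ℤ}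
    (h : IsQuaternionPair Y (quadraticGaussSum p Z) d) :
    IsQuaternionPair (Pi.mulSingle j Y) (quadraticGaussSum p (Pi.mulSingle j Z)) d := by
  refine .pi fun i => ?_
  rw [show quadraticGaussSum p (Pi.mulSingle j Z) i = quadraticGaussSum p (Pi.mulSingle j Z i) from
    map_quadraticGaussSum (Pi.evalRingHom R i) _]
  obtain rfl | hij := eq_or_ne i j
  · simpa only [Pi.mulSingle_eq_same] using h
  · rw [Pi.mulSingle_eq_of_ne hij, Pi.mulSingle_eq_of_ne hij, quadraticGaussSum_one hp]
    exact .one_zero d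

lemma trace_blockDiagonalHom_one_sub_mulSingle_sq {R : Type*} [Ring R] {l : ℕ} {m : Fin l → ℕ}
    {j : Fin l} {Y : Matrix (Fin (m j)) (Fin (m j)) R} (hY : Y ^ 2 = -1) :
    (1 - blockDiagonalHom R m (Pi.mulSingle j Y) ^ 2).trace = 2 * (m j : R) := by
  rw [← map_pow, ← map_one (blockDiagonalHom R m), ← map_sub, trace_blockDiagonalHom,
    Fintype.sum_eq_single j fun i hi => ?_]
  · simp only [Pi.sub_apply, Pi.one_apply, Pi.pow_apply, Pi.mulSingle_eq_same, hY, sub_neg_eq_add,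
      Matrix.trace_add, Matrix.trace_one, Fintype.card_fin, two_mul]
  · simp [Pi.mulSingle_eq_of_ne hi]

theorem exists_rep_isSumTwoSq_of_descends (k : Type*) {K : Type*} [Field k] [Field K] [CharZero K]
    [Algebra k K] {l : ℕ} {p : Fin l → ℕ} (hp : ∀ j, (p j).Prime) (hp3 : ∀ j, p j % 4 = 3)
    (h : ∀ j, IsSumTwoSq (-(p j : K))) :
    ∃ (H : ∀ j, Subgroup (GL (Fin (p j - 1)) K)), (∀ j, Finite (H j)) ∧
      ∀ K₀ : IntermediateField k K, Descends (blockRep H) K₀ →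
        ∀ j, IsSumTwoSq (-(p j : K₀)) := by
  have hfact : ∀ j, Fact (p j).Prime := fun j => ⟨hp j⟩
  choose H hfin y z hY hpair using fun j => exists_finite_subgroup_isQuaternionPair (hp3 j) (h j)
  refine ⟨H, hfin, fun K₀ hK₀ j => ?_⟩
  have hdesc := isSumTwoSq_of_descends hK₀ (y := Pi.mulSingle j (y j)) (z := Pi.mulSingle j (z j))
    (p := p j) (d := -p j) (m := p j - 1) ?_ (by have := hp3 j; lia) ?_
  · simpa using hdesc
  · rw [coe_blockRep_mulSingle, coe_blockRep_mulSingle, ← map_quadraticGaussSum]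
    exact ((hpair j).mulSingle (by have := hp3 j; lia)).map _
  · rw [coe_blockRep_mulSingle]
    exact trace_blockDiagonalHom_one_sub_mulSingle_sq (hY j)

end Block

section TranscendenceDegree

variable {k K : Type*} [Field k] [Field K] [Algebra k K] {K₀ : IntermediateField k K} {d : ℕ}

lemma trdegEq_of_trdeg_eq (h : Algebra.trdeg k K₀ = d) : TrdegEq K₀ d := by
  refine ⟨fun s hs => ?_, ?_⟩
  · have hle := hs.cardinalMk_le_trdeg
    rw [h] at hle
    simpa using hle
  · obtain ⟨s, hs⟩ := exists_isTranscendenceBasis k K₀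
    have hcard : Cardinal.mk s = d := hs.cardinalMk_eq_trdeg.trans h
    have hfin : s.Finite :=
      Cardinal.lt_aleph0_iff_set_finite.1 (hcard ▸ Cardinal.natCast_lt_aleph0)
    lift s to Finset K₀ using hfin
    exact ⟨s, hs.1, by exact_mod_cast Cardinal.mk_coe_finset.symm.trans hcard⟩

lemma not_trdegLT_of_trdegEq (h : TrdegEq K₀ d) : ¬ TrdegLT K₀ d := by
  obtain ⟨s, hs, rfl⟩ := h.2
  exact fun hlt => (hlt s hs).false

end TranscendenceDegree

lemma descends_top {k K : Type*} [Field k] [Field K] [Algebra k K] {G : Type*} [Group G] {n : ℕ}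
    (ρ : G →* GL (Fin n) K) : Descends ρ (⊤ : IntermediateField k K) := by
  let e : K →+* (⊤ : IntermediateField k K) := (IntermediateField.topEquiv (F := k) (E := K)).symm
  refine ⟨(Units.map e.mapMatrix.toMonoidHom).comp ρ, 1, fun g => ?_⟩
  rw [one_mul, inv_one, mul_one]
  rfl

lemma exists_injective_prime_mod_four_eq_three :
    ∃ p : ℕ → ℕ, Function.Injective p ∧ (∀ i, (p i).Prime) ∧ ∀ i, p i % 4 = 3 :=
  have hinf := Nat.infinite_setOfPred_prime_and_modEq (q := 4) (a := 3) (by norm_num) (by norm_num)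
  let p := hinf.natEmbedding
  ⟨fun i => p i, Subtype.val_injective.comp p.injective, fun i => (p i).2.1, fun i => (p i).2.2⟩

end EdRep

/-- A variant of a theorem of Brauer: for every integer `l ≥ 1` there exist a number
field `k`, a finite group `G`, a field extension `K/k` and a representation
`ρ : G → GL_n(K)` whose essential dimension equals `l`. -/
theorem exists_rep_with_ed_eq (l : ℕ) (hl : 1 ≤ l) : Nonempty (EdRepWitness l) := by
  obtain ⟨p, hpi, hp, hp3⟩ := EdRep.exists_injective_prime_mod_four_eq_three
  obtain ⟨K, _, _, hK, htrdeg⟩ := EdRep.exists_field_trdeg_eq_card_of_isSumTwoSq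
    (k := ℚ) (ι := Fin l) (d := fun j => -(p j : ℚ)) two_ne_zero (by norm_num)
    (fun j => neg_ne_zero.2 (Nat.cast_ne_zero.2 (hp j).ne_zero))
    (fun e => EdRep.even_of_isSumTwoSq_prod_neg_pow (fun j : Fin l => hp j) (fun j => hp3 j)
      (hpi.comp Fin.val_injective))
  simp only [map_neg, map_natCast, Fintype.card_fin] at hK htrdeg
  have : CharZero K := algebraRat.charZero K
  obtain ⟨H, _, hH⟩ := EdRep.exists_rep_isSumTwoSq_of_descends ℚ (fun j : Fin l => hp j)
    (fun j => hp3 j) hK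
  have htrdegEq (K₀ : IntermediateField ℚ K) (h : Descends (EdRep.blockRep H) K₀) :
      TrdegEq K₀ l :=
    EdRep.trdegEq_of_trdeg_eq (htrdeg K₀ (hH K₀ h))
  exact ⟨{
    k := ℚ
    K := K
    G := ∀ j, H j
    n := ∑ j : Fin l, (p j - 1)
    ρ := EdRep.blockRep H
    descends_to_l := ⟨⊤, EdRep.descends_top _, htrdegEq ⊤ (EdRep.descends_top _)⟩
    not_below_l := fun K₀ hlt h => EdRep.not_trdegLT_of_trdegEq (htrdegEq K₀ h) hlt }⟩
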